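/- Let f : ℝ → ℝ be twice continuously differentiable with f'(0) ≥ 0 and f'' Lipschitz continuous. Let ū : [0,∞) → ℝ be absolutely continuous with ū(0) = 0 and ū' ∈ L², and let μ̄ be a finite nonnegative Borel measure on [0,∞) whose absolutely continuous part has density ū'(x)². For i = 1,2 let uⁱ : [0,∞)×[0,∞) → ℝ and t ↦ μⁱ_{(t)} (finite nonnegative Borel measures on [0,∞)) satisfy: (a) uⁱ is locally Hölder continuous, uⁱ(0,·) = ū, uⁱ(t,0) = 0, each uⁱ(t,·) is absolutely continuous with square-integrable derivative uⁱ_x(t,·), and for every t ≥ 0 and almost every x ≥ 0, uⁱ(t,x) = ū(x) + ∫₀^t [ −f'(uⁱ)uⁱ_x + (1/2)∫₀^x f''(uⁱ)·(uⁱ_x)² dy ](s,x) ds; (b) μⁱ_{(0)} = μ̄, the absolutely continuous part of μⁱ_{(t)} has density uⁱ_x(t,x)², and for all 0 ≤ t₁ < t₂ and every continuously differentiable compactly supported φ : [0,∞)×[0,∞) → ℝ, ∫φ(t₂,·)dμⁱ_{(t₂)} − ∫φ(t₁,·)dμⁱ_{(t₁)} = ∫_{t₁}^{t₂} ∫ [φ_t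 + φ_x·f'(uⁱ(t,·))] dμⁱ_{(t)} dt; (c) defining yⁱ(t,ξ) = inf{ x ≥ 0 : μⁱ_{(t)}([0,x]) ≥ ξ } and Uⁱ(t,ξ) = uⁱ(t, yⁱ(t,ξ)), for almost every ξ the map t ↦ Uⁱ(t,ξ) is absolutely continuous and satisfies ∂_t Uⁱ(t,ξ) = (1/2)∫₀^ξ f''(Uⁱ(t,η)) dη for almost every t. Then u¹(t,x) = u²(t,x) for all (t,x) and μ¹_{(t)} = μ²_{(t)} for all t ≥ 0. -/

import Mathlib

open MeasureTheory Set Real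

/-- The quantile ("energy-characteristic") function
`y(t,ξ) = inf { x ≥ 0 : μ_{(t)}([0,x]) ≥ ξ }` associated with a family of
measures `μ_{(t)}`. -/
noncomputable def quantile (μ : ℝ → Measure ℝ) (t ξ : ℝ) : ℝ :=
  sInf {x : ℝ | 0 ≤ x ∧ ENNReal.ofReal ξ ≤ μ t (Set.Icc 0 x)}

/-- `ConsSol f ubar μbar u ux μ` says that `(u, μ)` (with `ux` the spatial
derivative of `u`) is a conservative solution of the initial-boundary value
problem for `u_t + f(u)_x = (1/2)∫₀^x f''(u)u_x² dy` on the quarter plane with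
data `(ū, μ̄)`, satisfying conditions (a), (b), (c) of the uniqueness theorem:

(a) `u` is locally Hölder continuous, takes the initial and boundary data, is
absolutely continuous in `x` with square-integrable derivative `ux`, and
satisfies the integrated equation;

(b) `μ_{(0)} = μ̄`, each `μ_{(t)}` is a finite measure on `[0,∞)` whose
absolutely continuous part has density `ux(t,·)²`, and `t ↦ μ_{(t)}` is a
measure-valued solution of the transport equation `w_t + (f'(u)w)_x = 0`;

(c) for a.e. `ξ`, along the energy-quantile characteristics the values
`U(t,ξ) = u(t, y(t,ξ))` satisfy `∂_t U(t,ξ) = (1/2)∫₀^ξ f''(U(t,η)) dη`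
(encoded in integrated form). -/
def ConsSol (f ubar : ℝ → ℝ) (μbar : Measure ℝ)
    (u ux : ℝ → ℝ → ℝ) (μ : ℝ → Measure ℝ) : Prop :=
  -- (a)
  (∀ S : Set (ℝ × ℝ), Bornology.IsBounded S → ∃ C α : ℝ, 0 < C ∧ 0 < α ∧ α ≤ 1 ∧
    ∀ t x s y : ℝ, (t, x) ∈ S → (s, y) ∈ S → 0 ≤ t → 0 ≤ x → 0 ≤ s → 0 ≤ y →
      |u t x - u s y| ≤ C * (|t - s| + |x - y|) ^ α) ∧
  (∀ x : ℝ, 0 ≤ x → u 0 x = ubar x) ∧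
  (∀ t : ℝ, 0 ≤ t → u t 0 = 0) ∧
  (∀ t : ℝ, 0 ≤ t →
    (∀ x : ℝ, 0 ≤ x → IntervalIntegrable (ux t) volume 0 x ∧
      u t x = ∫ y in (0:ℝ)..x, ux t y) ∧
    IntegrableOn (fun x => (ux t x) ^ 2) (Set.Ici 0)) ∧
  (∀ t : ℝ, 0 ≤ t → ∀ᵐ x ∂(volume.restrict (Set.Ici 0)),
    u t x = ubar x + ∫ s in (0:ℝ)..t,
      (-(deriv f (u s x)) * ux s x +
        (1 / 2) * ∫ y in (0:ℝ)..x, deriv (deriv f) (u s y) * (ux s y) ^ 2)) ∧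
  -- (b)
  μ 0 = μbar ∧
  (∀ t : ℝ, 0 ≤ t → μ t Set.univ < ⊤ ∧ μ t (Set.Iio 0) = 0 ∧
    (∀ᵐ x ∂(volume.restrict (Set.Ici 0)),
      (μ t).rnDeriv volume x = ENNReal.ofReal ((ux t x) ^ 2))) ∧
  (∀ t₁ t₂ : ℝ, 0 ≤ t₁ → t₁ < t₂ → ∀ φ : ℝ → ℝ → ℝ,
    ContDiff ℝ 1 (Function.uncurry φ) → HasCompactSupport (Function.uncurry φ) →
    (∫ x, φ t₂ x ∂(μ t₂)) - (∫ x, φ t₁ x ∂(μ t₁)) =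
      ∫ t in t₁..t₂, ∫ x,
        (deriv (fun s => φ s x) t + deriv (fun y => φ t y) x * deriv f (u t x))
          ∂(μ t)) ∧
  -- (c)
  (∀ᵐ ξ ∂(volume.restrict (Set.Icc 0 (μbar Set.univ).toReal)),
    ∀ t : ℝ, 0 ≤ t →
      u t (quantile μ t ξ) = u 0 (quantile μ 0 ξ) +
        ∫ s in (0:ℝ)..t,
          (1 / 2) * ∫ η in (0:ℝ)..ξ, deriv (deriv f) (u s (quantile μ s η)))

open Filter Topology

/-- Abstract transport data. -/
structure Transp (v : ℝ → ℝ → ℝ) (μ : ℝ → Measure ℝ) : Prop where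
  fin : ∀ t : ℝ, 0 ≤ t → μ t Set.univ < ⊤
  neg : ∀ t : ℝ, 0 ≤ t → μ t (Set.Iio 0) = 0
  weak : ∀ t₁ t₂ : ℝ, 0 ≤ t₁ → t₁ < t₂ → ∀ φ : ℝ → ℝ → ℝ,
    ContDiff ℝ 1 (Function.uncurry φ) → HasCompactSupport (Function.uncurry φ) →
    (∫ x, φ t₂ x ∂(μ t₂)) - (∫ x, φ t₁ x ∂(μ t₁)) =
      ∫ t in t₁..t₂, ∫ x,
        (deriv (fun s => φ s x) t + deriv (fun y => φ t y) x * v t x) ∂(μ t)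
  cont : ContinuousOn (Function.uncurry v) (Ici 0 ×ˢ Ici 0)

/-- Smooth step: `1` for `z ≤ 0`, `0` for `z ≥ 1`. -/
noncomputable def stepf (z : ℝ) : ℝ := 1 - Real.smoothTransition z

lemma stepf_contDiff : ContDiff ℝ 1 stepf := by
  unfold stepf
  exact contDiff_const.sub (Real.smoothTransition.contDiff (n := 1))

lemma stepf_le_one (z : ℝ) : stepf z ≤ 1 := by
  have := Real.smoothTransition.nonneg z
  unfold stepf; linarith

lemma stepf_nonneg (z : ℝ) : 0 ≤ stepf z := by
  have := Real.smoothTransition.le_one z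
  unfold stepf; linarith

lemma stepf_of_nonpos {z : ℝ} (h : z ≤ 0) : stepf z = 1 := by
  unfold stepf; rw [Real.smoothTransition.zero_of_nonpos h]; ring

lemma stepf_of_one_le {z : ℝ} (h : 1 ≤ z) : stepf z = 0 := by
  unfold stepf; rw [Real.smoothTransition.one_of_one_le h]; ring

lemma stepf_hasDerivAt (z : ℝ) : HasDerivAt stepf (deriv stepf z) z :=
  ((stepf_contDiff.differentiable (by norm_num)) z).hasDerivAt

lemma stepf_deriv_nonpos (z : ℝ) : deriv stepf z ≤ 0 := by
  have hanti : Antitone stepf := fun a b hab => by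
    have := Real.smoothTransition.monotone hab
    unfold stepf; linarith
  exact hanti.deriv_nonpos

lemma stepf_deriv_of_neg {z : ℝ} (h : z < 0) : deriv stepf z = 0 := by
  have : stepf =ᶠ[𝓝 z] fun _ => 1 := by
    filter_upwards [Iio_mem_nhds h] with w hw
    exact stepf_of_nonpos (le_of_lt hw)
  rw [this.deriv_eq]; simp

lemma stepf_deriv_of_gt {z : ℝ} (h : 1 < z) : deriv stepf z = 0 := by
  have : stepf =ᶠ[𝓝 z] fun _ => 0 := by
    filter_upwards [Ioi_mem_nhds h] with w hw
    exact stepf_of_one_le (le_of_lt hw)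
  rw [this.deriv_eq]; simp

lemma Transp.ae_nonneg {v : ℝ → ℝ → ℝ} {μ : ℝ → Measure ℝ} (h : Transp v μ) {t : ℝ}
    (ht : 0 ≤ t) : ∀ᵐ x ∂(μ t), 0 ≤ x := by
  rw [ae_iff]
  have : {a : ℝ | ¬ 0 ≤ a} = Iio 0 := by ext; simp
  rw [this]; exact h.neg t ht

lemma Transp.test {v : ℝ → ℝ → ℝ} {μ : ℝ → Measure ℝ} (h : Transp v μ)
    {t₁ t₂ c z η : ℝ} (ht₁ : 0 ≤ t₁) (ht : t₁ < t₂) (hη : 0 < η) :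
    (∫ x, stepf ((x - (z + c * (t₂ - t₁))) / η) ∂(μ t₂)) -
      (∫ x, stepf ((x - z) / η) ∂(μ t₁)) =
      ∫ t in t₁..t₂, ∫ x,
        (deriv stepf ((x - (z + c * (t - t₁))) / η) / η * (v t x - c)) ∂(μ t) := by
  set S := Real.smoothTransition with hS
  have hSc : ContDiff ℝ 1 S := Real.smoothTransition.contDiff (n := 1)
  set τ : ℝ → ℝ := fun t => S (t - t₁ + 2) * S (t₂ + 2 - t) with hτ
  set β : ℝ → ℝ := fun x => S (x + 2) with hβ
  set φ : ℝ → ℝ → ℝ := fun t x => stepf ((x - (z + c * (t - t₁))) / η) * (τ t * β x) with hφ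
  have hτ1 : ∀ t, t₁ - 1 ≤ t → t ≤ t₂ + 1 → τ t = 1 := by
    intro t h1 h2
    simp only [hτ, hS]
    rw [Real.smoothTransition.one_of_one_le (by linarith),
      Real.smoothTransition.one_of_one_le (by linarith)]; ring
  have hβ1 : ∀ x, -1 ≤ x → β x = 1 := by
    intro x h1
    simp only [hβ, hS]
    rw [Real.smoothTransition.one_of_one_le (by linarith)]
  have hφ1 : ∀ t x, t₁ - 1 ≤ t → t ≤ t₂ + 1 → -1 ≤ x →
      φ t x = stepf ((x - (z + c * (t - t₁))) / η) := by
    intro t x h1 h2 h3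
    simp only [hφ]; rw [hτ1 t h1 h2, hβ1 x h3]; ring
  have hcd : ContDiff ℝ 1 (Function.uncurry φ) := by
    have e : Function.uncurry φ = fun p : ℝ × ℝ =>
        stepf ((p.2 - (z + c * (p.1 - t₁))) / η) *
          ((S (p.1 - t₁ + 2) * S (t₂ + 2 - p.1)) * S (p.2 + 2)) := by
      ext ⟨a, b⟩; rfl
    rw [e]
    refine (stepf_contDiff.comp ?_).mul (((hSc.comp ?_).mul (hSc.comp ?_)).mul (hSc.comp ?_)) <;>
      fun_prop
  have hcs : HasCompactSupport (Function.uncurry φ) := by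
    refine HasCompactSupport.intro (K := Icc (t₁ - 2) (t₂ + 2) ×ˢ
      Icc (-2) (|z| + |c| * (t₂ - t₁ + 2) + η)) (isCompact_Icc.prod isCompact_Icc) ?_
    rintro ⟨t, x⟩ hx
    show φ t x = 0
    by_cases h1 : t ≤ t₁ - 2
    · simp only [hφ, hτ, hS]
      rw [Real.smoothTransition.zero_of_nonpos (x := t - t₁ + 2) (by linarith)]; ring
    by_cases h2 : t₂ + 2 ≤ t
    · simp only [hφ, hτ, hS]
      rw [Real.smoothTransition.zero_of_nonpos (x := t₂ + 2 - t) (by linarith)]; ring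
    by_cases h3 : x ≤ -2
    · simp only [hφ, hβ, hS]
      rw [Real.smoothTransition.zero_of_nonpos (x := x + 2) (by linarith)]; ring
    push Not at h1 h2 h3
    have h4 : |z| + |c| * (t₂ - t₁ + 2) + η < x := by
      by_contra h4
      push Not at h4
      exact hx ⟨⟨h1.le, h2.le⟩, ⟨h3.le, h4⟩⟩
    have h5 : c * (t - t₁) ≤ |c| * (t₂ - t₁ + 2) := by
      calc c * (t - t₁) ≤ |c * (t - t₁)| := le_abs_self _
        _ = |c| * |t - t₁| := abs_mul _ _
        _ ≤ _ := by
          apply mul_le_mul_of_nonneg_left _ (abs_nonneg c)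
          rw [abs_le]; constructor <;> linarith
    simp only [hφ]
    rw [stepf_of_one_le]; · ring
    rw [le_div_iff₀ hη]
    have := le_abs_self z
    linarith
  have key := h.weak t₁ t₂ ht₁ ht φ hcd hcs
  have e2 : (∫ x, φ t₂ x ∂(μ t₂)) = ∫ x, stepf ((x - (z + c * (t₂ - t₁))) / η) ∂(μ t₂) := by
    apply integral_congr_ae
    filter_upwards [h.ae_nonneg (ht₁.trans ht.le)] with x hx
    exact hφ1 _ _ (by linarith) (by linarith) (by linarith)
  have e1 : (∫ x, φ t₁ x ∂(μ t₁)) = ∫ x, stepf ((x - z) / η) ∂(μ t₁) := by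
    apply integral_congr_ae
    filter_upwards [h.ae_nonneg ht₁] with x hx
    rw [hφ1 _ _ (by linarith) (by linarith) (by linarith)]
    simp
  rw [e2, e1] at key
  rw [key]
  apply intervalIntegral.integral_congr
  intro t htt
  rw [uIcc_of_le ht.le] at htt
  apply integral_congr_ae
  filter_upwards [h.ae_nonneg (ht₁.trans htt.1)] with x hx
  have d1 : deriv (fun s => φ s x) t = deriv stepf ((x - (z + c * (t - t₁))) / η) * (-c / η) := by
    have e : (fun s => φ s x) =ᶠ[𝓝 t] fun s => stepf ((x - (z + c * (s - t₁))) / η) := by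
      filter_upwards [Ioo_mem_nhds (show t₁ - 1 < t by linarith [htt.1])
        (show t < t₂ + 1 by linarith [htt.2])] with s hs
      exact hφ1 _ _ hs.1.le hs.2.le (by linarith)
    rw [e.deriv_eq]
    have hl : HasDerivAt (fun s : ℝ => (x - (z + c * (s - t₁))) / η) (-c / η) t := by
      have := (((((hasDerivAt_id t).sub_const t₁).const_mul c).const_add z).const_sub x).div_const η
      simpa using this
    exact ((stepf_hasDerivAt _).comp t hl).deriv
  have d2 : deriv (fun y => φ t y) x = deriv stepf ((x - (z + c * (t - t₁))) / η) * (1 / η) := by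
    have e : (fun y => φ t y) =ᶠ[𝓝 x] fun y => stepf ((y - (z + c * (t - t₁))) / η) := by
      filter_upwards [Ioi_mem_nhds (show -1 < x by linarith)] with y hy
      exact hφ1 _ _ (by linarith [htt.1]) (by linarith [htt.2]) (le_of_lt hy)
    rw [e.deriv_eq]
    have hl : HasDerivAt (fun y : ℝ => (y - (z + c * (t - t₁))) / η) (1 / η) x := by
      have := ((hasDerivAt_id x).sub_const (z + c * (t - t₁))).div_const η
      simpa using this
    exact ((stepf_hasDerivAt _).comp x hl).deriv
  rw [d1, d2]; ring

lemma stepf_integral_bounds (m : Measure ℝ) [IsFiniteMeasure m] (z η : ℝ) (hη : 0 < η) :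
    m.real (Iic z) ≤ ∫ x, stepf ((x - z) / η) ∂m ∧
      ∫ x, stepf ((x - z) / η) ∂m ≤ m.real (Iic (z + η)) := by
  have hc : Continuous fun x : ℝ => stepf ((x - z) / η) :=
    stepf_contDiff.continuous.comp (by fun_prop)
  have hi : Integrable (fun x : ℝ => stepf ((x - z) / η)) m := by
    refine Integrable.of_bound hc.aestronglyMeasurable 1 (Eventually.of_forall fun x => ?_)
    rw [Real.norm_eq_abs, abs_of_nonneg (stepf_nonneg _)]; exact stepf_le_one _
  constructor
  · rw [← integral_indicator_one measurableSet_Iic]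
    apply integral_mono _ hi
    · intro x
      by_cases hx : x ∈ Iic z
      · simp only [indicator_of_mem hx]
        rw [stepf_of_nonpos]; · simp
        exact div_nonpos_of_nonpos_of_nonneg (by simpa using hx) hη.le
      · simp only [indicator_of_notMem hx]; exact stepf_nonneg _
    · exact (integrable_const (1:ℝ)).indicator measurableSet_Iic
  · rw [← integral_indicator_one measurableSet_Iic]
    apply integral_mono hi
    · exact (integrable_const (1:ℝ)).indicator measurableSet_Iic
    · intro x
      by_cases hx : x ∈ Iic (z + η)
      · simp only [indicator_of_mem hx]; exact stepf_le_one _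
      · simp only [indicator_of_notMem hx]
        rw [stepf_of_one_le]
        rw [le_div_iff₀ hη]
        simp at hx; linarith

lemma Transp.fast {v : ℝ → ℝ → ℝ} {μ : ℝ → Measure ℝ} (h : Transp v μ)
    {t₁ t₂ c z η : ℝ} (ht₁ : 0 ≤ t₁) (ht : t₁ < t₂) (hη : 0 < η)
    (hv : ∀ t ∈ Icc t₁ t₂, ∀ x, 0 ≤ x → z + c * (t - t₁) ≤ x → x ≤ z + c * (t - t₁) + η →
      v t x ≤ c) :
    μ t₁ (Iic z) ≤ μ t₂ (Iic (z + c * (t₂ - t₁) + η)) := by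
  have ht₂ : 0 ≤ t₂ := ht₁.trans ht.le
  have : IsFiniteMeasure (μ t₁) := ⟨h.fin t₁ ht₁⟩
  have : IsFiniteMeasure (μ t₂) := ⟨h.fin t₂ ht₂⟩
  have key := h.test (c := c) (z := z) ht₁ ht hη
  have hpos : 0 ≤ ∫ t in t₁..t₂, ∫ x,
        (deriv stepf ((x - (z + c * (t - t₁))) / η) / η * (v t x - c)) ∂(μ t) := by
    apply intervalIntegral.integral_nonneg ht.le
    intro t htt
    apply integral_nonneg_of_ae
    filter_upwards [h.ae_nonneg (ht₁.trans htt.1)] with x hx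
    rcases lt_or_ge x (z + c * (t - t₁)) with h1 | h1
    · rw [stepf_deriv_of_neg (div_neg_of_neg_of_pos (by linarith) hη)]; simp
    rcases lt_or_ge (z + c * (t - t₁) + η) x with h2 | h2
    · rw [stepf_deriv_of_gt (by rw [lt_div_iff₀ hη]; linarith)]; simp
    exact mul_nonneg_of_nonpos_of_nonpos
      (div_nonpos_of_nonpos_of_nonneg (stepf_deriv_nonpos _) hη.le)
      (by linarith [hv t htt x hx h1 h2])
  have b1 := (stepf_integral_bounds (μ t₁) z η hη).1
  have b2 := (stepf_integral_bounds (μ t₂) (z + c * (t₂ - t₁)) η hη).2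
  have : (μ t₁).real (Iic z) ≤ (μ t₂).real (Iic (z + c * (t₂ - t₁) + η)) := by linarith
  rwa [measureReal_def, measureReal_def,
    ENNReal.toReal_le_toReal (measure_ne_top _ _) (measure_ne_top _ _)] at this

lemma Transp.slow {v : ℝ → ℝ → ℝ} {μ : ℝ → Measure ℝ} (h : Transp v μ)
    {t₁ t₂ c z η : ℝ} (ht₁ : 0 ≤ t₁) (ht : t₁ < t₂) (hη : 0 < η)
    (hv : ∀ t ∈ Icc t₁ t₂, ∀ x, 0 ≤ x → z + c * (t - t₁) ≤ x → x ≤ z + c * (t - t₁) + η →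
      c ≤ v t x) :
    μ t₂ (Iic (z + c * (t₂ - t₁))) ≤ μ t₁ (Iic (z + η)) := by
  have ht₂ : 0 ≤ t₂ := ht₁.trans ht.le
  have : IsFiniteMeasure (μ t₁) := ⟨h.fin t₁ ht₁⟩
  have : IsFiniteMeasure (μ t₂) := ⟨h.fin t₂ ht₂⟩
  have key := h.test (c := c) (z := z) ht₁ ht hη
  have hpos : 0 ≤ ∫ t in t₁..t₂, -∫ x,
        (deriv stepf ((x - (z + c * (t - t₁))) / η) / η * (v t x - c)) ∂(μ t) := by
    apply intervalIntegral.integral_nonneg ht.le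
    intro t htt
    rw [← integral_neg]
    apply integral_nonneg_of_ae
    filter_upwards [h.ae_nonneg (ht₁.trans htt.1)] with x hx
    rcases lt_or_ge x (z + c * (t - t₁)) with h1 | h1
    · rw [stepf_deriv_of_neg (div_neg_of_neg_of_pos (by linarith) hη)]; simp
    rcases lt_or_ge (z + c * (t - t₁) + η) x with h2 | h2
    · rw [stepf_deriv_of_gt (by rw [lt_div_iff₀ hη]; linarith)]; simp
    have := mul_nonpos_of_nonpos_of_nonneg
      (div_nonpos_of_nonpos_of_nonneg (stepf_deriv_nonpos ((x - (z + c * (t - t₁))) / η)) hη.le)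
      (show 0 ≤ v t x - c by linarith [hv t htt x hx h1 h2])
    simpa using this
  rw [intervalIntegral.integral_neg] at hpos
  have b1 := (stepf_integral_bounds (μ t₁) z η hη).2
  have b2 := (stepf_integral_bounds (μ t₂) (z + c * (t₂ - t₁)) η hη).1
  have : (μ t₂).real (Iic (z + c * (t₂ - t₁))) ≤ (μ t₁).real (Iic (z + η)) := by linarith
  rwa [measureReal_def, measureReal_def,
    ENNReal.toReal_le_toReal (measure_ne_top _ _) (measure_ne_top _ _)] at this

lemma le_of_small {a b r : ℝ} (hr : 0 < r) (h : ∀ η, 0 < η → η ≤ r → a ≤ b + 2 * η) : a ≤ b := by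
  by_contra hab
  push Not at hab
  have := h (min r ((a - b) / 4)) (lt_min hr (by linarith)) (min_le_left _ _)
  have h2 := min_le_right r ((a - b) / 4)
  linarith

section quant
variable {v : ℝ → ℝ → ℝ} {μ : ℝ → Measure ℝ}

lemma Transp.icc (h : Transp v μ) {t : ℝ} (ht : 0 ≤ t) (x : ℝ) :
    μ t (Icc 0 x) = μ t (Iic x) := by
  apply le_antisymm (measure_mono Icc_subset_Iic_self)
  have : Iic x ⊆ Icc 0 x ∪ Iio 0 := by
    intro y hy
    rcases lt_or_ge y 0 with h1 | h1
    · exact Or.inr h1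
    · exact Or.inl ⟨h1, hy⟩
  calc μ t (Iic x) ≤ μ t (Icc 0 x ∪ Iio 0) := measure_mono this
    _ ≤ μ t (Icc 0 x) + μ t (Iio 0) := measure_union_le _ _
    _ = _ := by rw [h.neg t ht, add_zero]

lemma Transp.pos_of (h : Transp v μ) {t : ℝ} (ht : 0 ≤ t) {ξ x : ℝ} (hξ : 0 < ξ)
    (hx : ENNReal.ofReal ξ ≤ μ t (Iic x)) : 0 ≤ x := by
  by_contra hneg
  push Not at hneg
  have : μ t (Iic x) = 0 := measure_mono_null (fun y hy => lt_of_le_of_lt hy hneg) (h.neg t ht)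
  rw [this] at hx
  have := ENNReal.ofReal_pos.2 hξ
  exact absurd hx (not_le.2 this)

lemma quantile_nonneg' (μ : ℝ → Measure ℝ) (t ξ : ℝ) : 0 ≤ quantile μ t ξ :=
  Real.sInf_nonneg fun _ hx => hx.1

lemma Transp.q_le (h : Transp v μ) {t : ℝ} (ht : 0 ≤ t) {ξ x : ℝ} (hξ : 0 < ξ)
    (hx : ENNReal.ofReal ξ ≤ μ t (Iic x)) : quantile μ t ξ ≤ x := by
  apply csInf_le ⟨0, fun _ hx => hx.1⟩
  exact ⟨h.pos_of ht hξ hx, by rw [h.icc ht]; exact hx⟩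

lemma Transp.q_mem (h : Transp v μ) {t : ℝ} (ht : 0 ≤ t) {ξ : ℝ} (hξ : 0 < ξ)
    (hN : ∃ x, ENNReal.ofReal ξ ≤ μ t (Iic x)) :
    ENNReal.ofReal ξ ≤ μ t (Iic (quantile μ t ξ)) := by
  have : IsFiniteMeasure (μ t) := ⟨h.fin t ht⟩
  have hne : {x : ℝ | 0 ≤ x ∧ ENNReal.ofReal ξ ≤ μ t (Set.Icc 0 x)}.Nonempty := by
    obtain ⟨x, hx⟩ := hN
    exact ⟨x, h.pos_of ht hξ hx, by rw [h.icc ht]; exact hx⟩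
  set q := quantile μ t ξ with hq
  have hn : ∀ n : ℕ, ENNReal.ofReal ξ ≤ μ t (Iic (q + 1 / ((n : ℝ) + 1))) := by
    intro n
    have hlt : sInf {x : ℝ | 0 ≤ x ∧ ENNReal.ofReal ξ ≤ μ t (Set.Icc 0 x)} <
        q + 1 / ((n : ℝ) + 1) := by
      have : (0:ℝ) < 1 / ((n : ℝ) + 1) := by positivity
      show q < _
      linarith
    obtain ⟨x, hx, hxl⟩ := exists_lt_of_csInf_lt hne hlt
    refine hx.2.trans ((measure_mono ?_))
    exact fun y hy => hy.2.trans hxl.le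
  have hI : (⋂ n : ℕ, Iic (q + 1 / ((n : ℝ) + 1))) = Iic q := by
    ext y
    simp only [mem_iInter, mem_Iic]
    constructor
    · intro hy
      have : Tendsto (fun n : ℕ => q + 1 / ((n : ℝ) + 1)) atTop (𝓝 (q + 0)) :=
        tendsto_const_nhds.add tendsto_one_div_add_atTop_nhds_zero_nat
      rw [add_zero] at this
      exact ge_of_tendsto' this hy
    · intro hy n
      have : (0:ℝ) < 1 / ((n : ℝ) + 1) := by positivity
      linarith
  have hten := tendsto_measure_iInter_atTop (μ := μ t)
    (s := fun n : ℕ => Iic (q + 1 / ((n : ℝ) + 1)))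
    (fun _ => measurableSet_Iic.nullMeasurableSet)
    (fun m n hmn => Iic_subset_Iic.2 (by
      have := Nat.one_div_le_one_div (α := ℝ) hmn
      linarith)) ⟨0, measure_ne_top _ _⟩
  rw [hI] at hten
  exact ge_of_tendsto' hten hn

lemma Transp.lt_q (h : Transp v μ) {t : ℝ} (ht : 0 ≤ t) {ξ x : ℝ} (hξ : 0 < ξ)
    (hN : ∃ x, ENNReal.ofReal ξ ≤ μ t (Iic x))
    (hx : μ t (Iic x) < ENNReal.ofReal ξ) : x < quantile μ t ξ := by
  by_contra hc
  push Not at hc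
  exact absurd ((h.q_mem ht hξ hN).trans (measure_mono (Iic_subset_Iic.2 hc))) (not_le.2 hx)

lemma Transp.lt_of_lt_q (h : Transp v μ) {t : ℝ} (ht : 0 ≤ t) {ξ x : ℝ} (hξ : 0 < ξ)
    (hx : x < quantile μ t ξ) : μ t (Iic x) < ENNReal.ofReal ξ := by
  by_contra hc
  push Not at hc
  exact absurd (h.q_le ht hξ hc) (not_le.2 hx)

lemma Transp.fast' (h : Transp v μ)
    {t₀ t₁ t₂ c z η : ℝ} (ht₁ : 0 ≤ t₁) (ht : t₁ < t₂) (hη : 0 < η)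
    (hv : ∀ t ∈ Icc t₁ t₂, ∀ x, 0 ≤ x → z + c * (t - t₀) ≤ x → x ≤ z + c * (t - t₀) + η →
      v t x ≤ c) :
    μ t₁ (Iic (z + c * (t₁ - t₀))) ≤ μ t₂ (Iic (z + c * (t₂ - t₀) + η)) := by
  have := h.fast (c := c) (z := z + c * (t₁ - t₀)) ht₁ ht hη (fun t htt x hx h1 h2 =>
    hv t htt x hx (by linarith) (by linarith))
  convert this using 3
  ring

lemma Transp.slow' (h : Transp v μ)
    {t₀ t₁ t₂ c z η : ℝ} (ht₁ : 0 ≤ t₁) (ht : t₁ < t₂) (hη : 0 < η)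
    (hv : ∀ t ∈ Icc t₁ t₂, ∀ x, 0 ≤ x → z + c * (t - t₀) ≤ x → x ≤ z + c * (t - t₀) + η →
      c ≤ v t x) :
    μ t₂ (Iic (z + c * (t₂ - t₀))) ≤ μ t₁ (Iic (z + c * (t₁ - t₀) + η)) := by
  have := h.slow (c := c) (z := z + c * (t₁ - t₀)) ht₁ ht hη (fun t htt x hx h1 h2 =>
    hv t htt x hx (by linarith) (by linarith))
  convert this using 3
  ring

lemma Transp.loc (h : Transp v μ) {t₀ ξ ε : ℝ} (ht₀ : 0 ≤ t₀) (hξ : 0 < ξ)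
    (hN : ∃ x, ENNReal.ofReal ξ ≤ μ t₀ (Iic x)) (hε : 0 < ε) :
    ∃ δ > 0, ∀ t, 0 ≤ t → |t - t₀| ≤ δ → (∃ x, ENNReal.ofReal ξ ≤ μ t (Iic x)) ∧
      |quantile μ t ξ - quantile μ t₀ ξ - v t₀ (quantile μ t₀ ξ) * (t - t₀)| ≤ ε * |t - t₀| := by
  set y₀ := quantile μ t₀ ξ with hy₀
  have hy₀n : 0 ≤ y₀ := quantile_nonneg' _ _ _
  have hmem := h.q_mem ht₀ hξ hN
  rw [← hy₀] at hmem
  set v₀ := v t₀ y₀ with hv₀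
  have hcont := h.cont (t₀, y₀) ⟨ht₀, hy₀n⟩
  rw [Metric.continuousWithinAt_iff] at hcont
  obtain ⟨ρ, hρ, hcont⟩ := hcont ε hε
  have hc : ∀ s x, 0 ≤ s → 0 ≤ x → |s - t₀| < ρ → |x - y₀| < ρ → |v s x - v₀| < ε := by
    intro s x hs hx h1 h2
    have := @hcont (s, x) ⟨hs, hx⟩ (by
      rw [Prod.dist_eq, max_lt_iff]; exact ⟨h1, h2⟩)
    exact this
  set a := |v₀| + ε with ha
  have ha0 : 0 < a := by positivity
  set δ := min (ρ / 2) (ρ / (4 * a)) with hδ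
  have hδ0 : 0 < δ := lt_min (by linarith) (by positivity)
  have hδ1 : δ < ρ := (min_le_left _ _).trans_lt (by linarith)
  have hδ2 : a * δ ≤ ρ / 4 := by
    calc a * δ ≤ a * (ρ / (4 * a)) := mul_le_mul_of_nonneg_left (min_le_right _ _) ha0.le
      _ = ρ / 4 := by field_simp
  have hline : ∀ c, |c| ≤ a → ∀ η, 0 < η → η ≤ ρ / 8 → ∀ s x, 0 ≤ s → 0 ≤ x → |s - t₀| ≤ δ →
      y₀ - 2 * η + c * (s - t₀) ≤ x → x ≤ y₀ + c * (s - t₀) + 2 * η → |v s x - v₀| < ε := by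
    intro c hca η hη hη2 s x hs hx h1 h2 h3
    apply hc s x hs hx (h1.trans_lt hδ1)
    have : |c * (s - t₀)| ≤ ρ / 4 := by
      rw [abs_mul]
      exact (mul_le_mul hca h1 (abs_nonneg _) ha0.le).trans hδ2
    rw [abs_le] at this
    rw [abs_lt]; constructor <;> linarith [this.1, this.2]
  have hcp : |v₀ + ε| ≤ a := by
    calc |v₀ + ε| ≤ |v₀| + |ε| := abs_add_le _ _
      _ = a := by rw [abs_of_pos hε]
  have hcm : |v₀ - ε| ≤ a := by
    calc |v₀ - ε| ≤ |v₀| + |ε| := abs_sub _ _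
      _ = a := by rw [abs_of_pos hε]
  refine ⟨δ, hδ0, fun t ht htδ => ?_⟩
  rcases lt_trichotomy t₀ t with hlt | heq | hlt
  · have hseg : ∀ s ∈ Icc t₀ t, 0 ≤ s ∧ |s - t₀| ≤ δ := by
      intro s hs
      rw [abs_of_nonneg (by linarith)] at htδ
      exact ⟨ht₀.trans hs.1, by rw [abs_of_nonneg (by linarith [hs.1])]; linarith [hs.2]⟩
    have up : ∀ η, 0 < η → η ≤ ρ / 8 →
        ENNReal.ofReal ξ ≤ μ t (Iic (y₀ + (v₀ + ε) * (t - t₀) + η)) := by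
      intro η hη hη2
      have := h.fast' (t₀ := t₀) (c := v₀ + ε) (z := y₀) ht₀ hlt hη (fun s hs x hx h1 h2 => by
        have := hline _ hcp η hη hη2 s x (hseg s hs).1 hx (hseg s hs).2 (by linarith) (by linarith)
        rw [abs_lt] at this; linarith [this.2])
      simp only [sub_self, mul_zero, add_zero] at this
      exact hmem.trans this
    have hNt : ∃ x, ENNReal.ofReal ξ ≤ μ t (Iic x) := ⟨_, up (ρ / 8) (by linarith) le_rfl⟩
    refine ⟨hNt, ?_⟩
    have u1 : quantile μ t ξ ≤ y₀ + (v₀ + ε) * (t - t₀) := by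
      apply le_of_small (r := ρ / 8) (by linarith)
      intro η hη hη2
      have := h.q_le ht hξ (up η hη hη2)
      linarith
    have l1 : y₀ + (v₀ - ε) * (t - t₀) ≤ quantile μ t ξ := by
      apply le_of_small (r := ρ / 8) (by linarith)
      intro η hη hη2
      have := h.slow' (t₀ := t₀) (c := v₀ - ε) (z := y₀ - 2 * η) ht₀ hlt hη
        (fun s hs x hx h1 h2 => by
          have := hline _ hcm η hη hη2 s x (hseg s hs).1 hx (hseg s hs).2 (by linarith)
            (by linarith)
          rw [abs_lt] at this; linarith [this.1])
      have h3 := h.lt_of_lt_q (x := y₀ - 2 * η + (v₀ - ε) * (t₀ - t₀) + η) ht₀ hξ (by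
        rw [← hy₀, sub_self, mul_zero]; linarith)
      have := h.lt_q ht hξ hNt (this.trans_lt h3)
      linarith
    rw [abs_of_pos (by linarith : 0 < t - t₀), abs_le]
    constructor <;> linarith
  · subst heq
    refine ⟨hN, ?_⟩
    rw [← hy₀]; simp
  · have hseg : ∀ s ∈ Icc t t₀, 0 ≤ s ∧ |s - t₀| ≤ δ := by
      intro s hs
      rw [abs_of_nonpos (by linarith)] at htδ
      exact ⟨ht.trans hs.1, by rw [abs_of_nonpos (by linarith [hs.2])]; linarith [hs.1]⟩
    have up : ∀ η, 0 < η → η ≤ ρ / 8 →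
        ENNReal.ofReal ξ ≤ μ t (Iic (y₀ + (v₀ - ε) * (t - t₀) + η)) := by
      intro η hη hη2
      have := h.slow' (t₀ := t₀) (c := v₀ - ε) (z := y₀) ht hlt hη (fun s hs x hx h1 h2 => by
        have := hline _ hcm η hη hη2 s x (hseg s hs).1 hx (hseg s hs).2 (by linarith) (by linarith)
        rw [abs_lt] at this; linarith [this.1])
      simp only [sub_self, mul_zero, add_zero] at this
      exact hmem.trans this
    have hNt : ∃ x, ENNReal.ofReal ξ ≤ μ t (Iic x) := ⟨_, up (ρ / 8) (by linarith) le_rfl⟩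
    refine ⟨hNt, ?_⟩
    have u1 : quantile μ t ξ ≤ y₀ + (v₀ - ε) * (t - t₀) := by
      apply le_of_small (r := ρ / 8) (by linarith)
      intro η hη hη2
      have := h.q_le ht hξ (up η hη hη2)
      linarith
    have l1 : y₀ + (v₀ + ε) * (t - t₀) ≤ quantile μ t ξ := by
      apply le_of_small (r := ρ / 8) (by linarith)
      intro η hη hη2
      have := h.fast' (t₀ := t₀) (c := v₀ + ε) (z := y₀ - 2 * η) ht hlt hη
        (fun s hs x hx h1 h2 => by
          have := hline _ hcp η hη hη2 s x (hseg s hs).1 hx (hseg s hs).2 (by linarith)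
            (by linarith)
          rw [abs_lt] at this; linarith [this.2])
      have h3 := h.lt_of_lt_q (x := y₀ - 2 * η + (v₀ + ε) * (t₀ - t₀) + η) ht₀ hξ (by
        rw [← hy₀, sub_self, mul_zero]; linarith)
      have := h.lt_q ht hξ hNt (this.trans_lt h3)
      linarith
    rw [abs_of_neg (by linarith : t - t₀ < 0), abs_le]
    constructor <;> linarith

lemma Transp.hasDeriv (h : Transp v μ) {t₀ ξ : ℝ} (ht₀ : 0 ≤ t₀) (hξ : 0 < ξ)
    (hN : ∃ x, ENNReal.ofReal ξ ≤ μ t₀ (Iic x)) :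
    HasDerivWithinAt (fun t => quantile μ t ξ) (v t₀ (quantile μ t₀ ξ)) (Ici 0) t₀ := by
  rw [hasDerivWithinAt_iff_isLittleO, Asymptotics.isLittleO_iff]
  intro ε hε
  obtain ⟨δ, hδ, H⟩ := h.loc ht₀ hξ hN hε
  filter_upwards [self_mem_nhdsWithin,
    mem_nhdsWithin_of_mem_nhds (Metric.closedBall_mem_nhds t₀ hδ)] with t ht htb
  have := (H t ht htb).2
  simp only [Real.norm_eq_abs, smul_eq_mul]
  rw [mul_comm (t - t₀)]
  exact this

/-- Quantitative continuation. -/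
lemma Transp.cont_step (h : Transp v μ) {ξ : ℝ} (hξ : 0 < ξ) (T B : ℝ) (hT : 0 ≤ T) (hB : 0 ≤ B) :
    ∃ δ > 0, ∀ t s, 0 ≤ t → t ≤ T → 0 ≤ s → s ≤ T → |s - t| ≤ δ →
      (∃ x, ENNReal.ofReal ξ ≤ μ t (Iic x)) → quantile μ t ξ ≤ B →
      ∃ x, ENNReal.ofReal ξ ≤ μ s (Iic x) := by
  have hK : IsCompact (Icc (0:ℝ) T ×ˢ Icc (0:ℝ) (B + 2)) := isCompact_Icc.prod isCompact_Icc
  obtain ⟨V, hV⟩ := hK.exists_bound_of_continuousOn (h.cont.mono (by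
    rintro ⟨a, b⟩ ⟨h1, h2⟩; exact ⟨h1.1, h2.1⟩))
  have hv : ∀ s x, 0 ≤ s → s ≤ T → 0 ≤ x → x ≤ B + 2 → |v s x| ≤ V := fun s x h1 h2 h3 h4 =>
    hV (s, x) ⟨⟨h1, h2⟩, ⟨h3, h4⟩⟩
  have hV0 : 0 ≤ V := (abs_nonneg _).trans (hv 0 0 le_rfl hT le_rfl (by linarith))
  refine ⟨1 / (V + 1), by positivity, fun t s ht htT hs hsT hst hN hqB => ?_⟩
  have hVd : V * |s - t| ≤ 1 := by
    calc V * |s - t| ≤ (V + 1) * (1 / (V + 1)) :=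
          mul_le_mul (by linarith) hst (abs_nonneg _) (by linarith)
      _ = 1 := by field_simp
  have hmem := h.q_mem ht hξ hN
  rcases lt_trichotomy t s with hlt | heq | hlt
  · rw [abs_of_pos (by linarith)] at hVd
    have := h.fast (c := V) (z := quantile μ t ξ) ht hlt one_pos (fun r hr x hx h1 h2 => by
      refine (le_abs_self _).trans (hv r x (ht.trans hr.1) (hr.2.trans hsT) hx ?_)
      have : V * (r - t) ≤ V * (s - t) := mul_le_mul_of_nonneg_left (by linarith [hr.2]) hV0
      linarith)
    exact ⟨_, hmem.trans this⟩
  · subst heq; exact hN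
  · rw [abs_of_neg (by linarith)] at hVd
    have := h.slow' (t₀ := t) (c := -V) (z := quantile μ t ξ) hs hlt one_pos
      (fun r hr x hx h1 h2 => by
        refine (abs_le.1 (hv r x (hs.trans hr.1) (hr.2.trans htT) hx ?_)).1
        have : V * (t - r) ≤ V * (t - s) := mul_le_mul_of_nonneg_left (by linarith [hr.1]) hV0
        linarith)
    rw [sub_self, mul_zero, add_zero] at this
    exact ⟨_, hmem.trans this⟩

/-- Global existence of quantiles under linear growth. -/
lemma Transp.global (h : Transp v μ) {ξ K : ℝ} (hξ : 0 < ξ)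
    (hK : ∀ t, 0 ≤ t → (∃ x, ENNReal.ofReal ξ ≤ μ t (Iic x)) →
      |v t (quantile μ t ξ)| ≤ K * (1 + quantile μ t ξ)) {t₀ : ℝ} (ht₀ : 0 ≤ t₀)
    (hN : ∃ x, ENNReal.ofReal ξ ≤ μ t₀ (Iic x)) {t : ℝ} (ht : 0 ≤ t) :
    ∃ x, ENNReal.ofReal ξ ≤ μ t (Iic x) := by
  set T := max t t₀ with hT
  have hT0 : 0 ≤ T := ht.trans (le_max_left _ _)
  have hKn : 0 ≤ K := by
    have h1 := (abs_nonneg _).trans (hK t₀ ht₀ hN)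
    have h2 := quantile_nonneg' μ t₀ ξ
    by_contra hneg
    push Not at hneg
    nlinarith
  set B := (1 + quantile μ t₀ ξ) * Real.exp (K * T) with hB
  have hB0 : 0 ≤ B := by
    have := quantile_nonneg' μ t₀ ξ
    positivity
  have hbound : ∀ s, 0 ≤ s → s ≤ T → (∀ r ∈ uIcc t₀ s, ∃ x, ENNReal.ofReal ξ ≤ μ r (Iic x)) →
      quantile μ s ξ ≤ B := by
    intro s hs hsT hr
    have hsub : uIcc t₀ s ⊆ Ici 0 := fun r hr => (le_min ht₀ hs).trans hr.1
    have hd : ∀ r ∈ uIcc t₀ s, HasDerivWithinAt (fun r => Real.log (1 + quantile μ r ξ))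
        (v r (quantile μ r ξ) / (1 + quantile μ r ξ)) (uIcc t₀ s) r := by
      intro r hr'
      have := quantile_nonneg' μ r ξ
      exact (((h.hasDeriv (hsub hr') hξ (hr r hr')).mono hsub).const_add 1).log (by positivity)
    have hb : ∀ r ∈ uIcc t₀ s, ‖v r (quantile μ r ξ) / (1 + quantile μ r ξ)‖ ≤ K := by
      intro r hr'
      have h0 := quantile_nonneg' μ r ξ
      rw [norm_div, Real.norm_eq_abs, Real.norm_eq_abs, abs_of_pos (by linarith : 0 < 1 + quantile μ r ξ),
        div_le_iff₀ (by linarith)]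
      exact hK r (hsub hr') (hr r hr')
    have := Convex.norm_image_sub_le_of_norm_hasDerivWithin_le hd hb (convex_uIcc t₀ s)
      left_mem_uIcc right_mem_uIcc
    rw [Real.norm_eq_abs, Real.norm_eq_abs] at this
    have h1 : |s - t₀| ≤ T := by
      rw [abs_le]; constructor <;> linarith [le_max_right t t₀]
    have h2 := (le_abs_self _).trans (this.trans (mul_le_mul_of_nonneg_left h1 hKn))
    have hq0 := quantile_nonneg' μ t₀ ξ
    have hqs := quantile_nonneg' μ s ξ
    have h3 : Real.log (1 + quantile μ s ξ) ≤ Real.log B := by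
      rw [hB, Real.log_mul (by positivity) (Real.exp_ne_zero _), Real.log_exp]; linarith
    have hBp : 0 < B := by positivity
    have := (Real.log_le_log_iff (by positivity) hBp).1 h3
    linarith
  obtain ⟨δ, hδ, hstep⟩ := h.cont_step hξ T B hT0 hB0
  have hind : ∀ n : ℕ, ∀ s, 0 ≤ s → s ≤ T → |s - t₀| ≤ n * δ →
      ∃ x, ENNReal.ofReal ξ ≤ μ s (Iic x) := by
    intro n
    induction n with
    | zero =>
      intro s hs hsT h1
      have : s = t₀ := by
        have : |s - t₀| = 0 := le_antisymm (by simpa using h1) (abs_nonneg _)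
        rw [abs_eq_zero] at this; linarith
      rw [this]; exact hN
    | succ n ih =>
      intro s hs hsT h1
      by_cases hcase : |s - t₀| ≤ n * δ
      · exact ih s hs hsT hcase
      push Not at hcase
      push_cast at h1
      have hn : 0 ≤ (n : ℝ) * δ := by positivity
      have hmax := le_max_right t t₀
      obtain ⟨s', hs'0, hs'T, hs'1, hs'2⟩ : ∃ s', 0 ≤ s' ∧ s' ≤ T ∧ |s' - t₀| ≤ n * δ ∧
          |s - s'| ≤ δ := by
        rcases le_total t₀ s with hle | hle
        · rw [abs_of_nonneg (by linarith)] at h1 hcase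
          refine ⟨t₀ + n * δ, by linarith, by linarith, ?_, ?_⟩
          · rw [abs_of_nonneg (by linarith)]; linarith
          · rw [abs_of_nonneg (by linarith)]; linarith
        · rw [abs_of_nonpos (by linarith)] at h1 hcase
          refine ⟨t₀ - n * δ, by linarith, by linarith, ?_, ?_⟩
          · rw [abs_of_nonpos (by linarith)]; linarith
          · rw [abs_of_nonpos (by linarith)]; linarith
      have hr : ∀ r ∈ uIcc t₀ s', ∃ x, ENNReal.ofReal ξ ≤ μ r (Iic x) := by
        intro r hr
        refine ih r ((le_min ht₀ hs'0).trans hr.1) (hr.2.trans (max_le hmax hs'T)) ?_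
        exact (abs_sub_left_of_mem_uIcc hr).trans hs'1
      exact hstep s' s hs'0 hs'T hs hsT hs'2 (hr s' right_mem_uIcc) (hbound s' hs'0 hs'T hr)
  obtain ⟨n, hn⟩ := exists_nat_ge (|t - t₀| / δ)
  exact hind n t ht (le_max_left _ _) (by rwa [div_le_iff₀ hδ] at hn)

end quant

/-- What is used about one conservative solution (besides (c)). -/
structure Sol (f : ℝ → ℝ) (u ux : ℝ → ℝ → ℝ) (μ : ℝ → Measure ℝ) : Prop where
  tr : Transp (fun t x => deriv f (u t x)) μ
  ucont : ContinuousOn (Function.uncurry u) (Ici 0 ×ˢ Ici 0)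
  rep : ∀ t : ℝ, 0 ≤ t → ∀ x : ℝ, 0 ≤ x → IntervalIntegrable (ux t) volume 0 x ∧
      u t x = ∫ y in (0:ℝ)..x, ux t y
  L2 : ∀ t : ℝ, 0 ≤ t → IntegrableOn (fun x => (ux t x) ^ 2) (Set.Ici 0)
  dens : ∀ t : ℝ, 0 ≤ t → ∀ᵐ x ∂(volume.restrict (Set.Ici 0)),
      (μ t).rnDeriv volume x = ENNReal.ofReal ((ux t x) ^ 2)

lemma consSol_sol {f ubar : ℝ → ℝ} (hf : ContDiff ℝ 2 f) {μbar : Measure ℝ}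
    {u ux : ℝ → ℝ → ℝ} {μ : ℝ → Measure ℝ} (h : ConsSol f ubar μbar u ux μ) :
    Sol f u ux μ := by
  obtain ⟨ha, -, -, hrep, -, -, hb, hw, -⟩ := h
  have hc : ContinuousOn (Function.uncurry u) (Ici 0 ×ˢ Ici 0) := by
    rintro ⟨t, x⟩ ⟨ht, hx⟩
    simp only [mem_Ici] at ht hx
    obtain ⟨C, α, hC, hα, -, H⟩ := ha (Metric.ball (t, x) 1) Metric.isBounded_ball
    have hlim : Tendsto (fun p : ℝ × ℝ => C * (|p.1 - t| + |p.2 - x|) ^ α)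
        (𝓝[Ici 0 ×ˢ Ici 0] (t, x)) (𝓝 0) := by
      have : Continuous (fun p : ℝ × ℝ => C * (|p.1 - t| + |p.2 - x|) ^ α) := by
        refine continuous_const.mul (Continuous.rpow_const (by fun_prop) fun _ => Or.inr hα.le)
      have h2 := this.tendsto (t, x)
      simp only [sub_self, abs_zero, add_zero, Real.zero_rpow hα.ne', mul_zero] at h2
      exact h2.mono_left nhdsWithin_le_nhds
    rw [ContinuousWithinAt, tendsto_iff_dist_tendsto_zero]
    refine squeeze_zero' (Eventually.of_forall fun _ => dist_nonneg) ?_ hlim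
    filter_upwards [self_mem_nhdsWithin,
      mem_nhdsWithin_of_mem_nhds (Metric.ball_mem_nhds (t, x) one_pos)] with p hp hpb
    obtain ⟨s, y⟩ := p
    exact H s y t x hpb (Metric.mem_ball_self one_pos) hp.1 hp.2 ht hx
  have hdf : Continuous (deriv f) := hf.continuous_deriv (by norm_num)
  refine ⟨⟨fun t ht => (hb t ht).1, fun t ht => (hb t ht).2.1, hw, ?_⟩, hc,
    fun t ht => (hrep t ht).1, fun t ht => (hrep t ht).2, fun t ht => (hb t ht).2.2⟩
  exact hdf.comp_continuousOn hc

section sol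
variable {f : ℝ → ℝ} {u ux : ℝ → ℝ → ℝ} {μ : ℝ → Measure ℝ}

lemma cs_aux {g : ℝ → ℝ} {a b : ℝ} (hab : a ≤ b) (h1 : IntervalIntegrable g volume a b)
    (h2 : IntervalIntegrable (fun x => g x ^ 2) volume a b) :
    (∫ x in a..b, g x) ^ 2 ≤ (b - a) * ∫ x in a..b, g x ^ 2 := by
  rcases hab.eq_or_lt with rfl | hlt
  · simp
  set I := ∫ x in a..b, g x with hI
  set c := I / (b - a) with hc
  have h3 : 0 ≤ ∫ x in a..b, (g x ^ 2 - 2 * c * g x + c ^ 2) := by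
    apply intervalIntegral.integral_nonneg hab
    intro x _
    nlinarith [sq_nonneg (g x - c)]
  rw [intervalIntegral.integral_add (h2.sub (h1.const_mul _)) intervalIntegrable_const,
    intervalIntegral.integral_sub h2 (h1.const_mul _), intervalIntegral.integral_const_mul,
    intervalIntegral.integral_const, smul_eq_mul, ← hI] at h3
  have hba : 0 < b - a := by linarith
  have hIc : I = c * (b - a) := by rw [hc]; field_simp
  rw [hIc] at h3 ⊢
  nlinarith

lemma Sol.energy (h : Sol f u ux μ) {t a b : ℝ} (ht : 0 ≤ t) (ha : 0 ≤ a) (hab : a ≤ b) :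
    (u t b - u t a) ^ 2 ≤ (b - a) * (μ t).real (Ioc a b) := by
  have : IsFiniteMeasure (μ t) := ⟨h.tr.fin t ht⟩
  have hb := ha.trans hab
  have ia := h.rep t ht a ha
  have ib := h.rep t ht b hb
  have hI : IntervalIntegrable (ux t) volume a b := ia.1.symm.trans ib.1
  have hsub : Ioc a b ⊆ Ici 0 := fun x hx => ha.trans hx.1.le
  have hI2' : IntegrableOn (fun x => ux t x ^ 2) (Ioc a b) := (h.L2 t ht).mono_set hsub
  have hI2 : IntervalIntegrable (fun x => ux t x ^ 2) volume a b :=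
    (intervalIntegrable_iff_integrableOn_Ioc_of_le hab).2 hI2'
  have e : u t b - u t a = ∫ x in a..b, ux t x := by
    rw [ia.2, ib.2, intervalIntegral.integral_interval_sub_left ib.1 ia.1]
  rw [e]
  refine (cs_aux hab hI hI2).trans (mul_le_mul_of_nonneg_left ?_ (by linarith))
  rw [intervalIntegral.integral_of_le hab, integral_eq_lintegral_of_nonneg_ae
    (Eventually.of_forall fun x => sq_nonneg _) hI2'.aestronglyMeasurable, measureReal_def]
  apply ENNReal.toReal_mono (measure_ne_top _ _)
  calc ∫⁻ x in Ioc a b, ENNReal.ofReal (ux t x ^ 2)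
      = ∫⁻ x in Ioc a b, (μ t).rnDeriv volume x := by
        apply lintegral_congr_ae
        filter_upwards [ae_restrict_of_ae_restrict_of_subset hsub (h.dens t ht)] with x hx
        exact hx.symm
    _ ≤ μ t (Ioc a b) := Measure.setLIntegral_rnDeriv_le _

lemma Sol.u_zero (h : Sol f u ux μ) {t : ℝ} (ht : 0 ≤ t) : u t 0 = 0 := by
  rw [(h.rep t ht 0 le_rfl).2]; simp

lemma Sol.u_cont (h : Sol f u ux μ) {t : ℝ} (ht : 0 ≤ t) : ContinuousOn (u t) (Ici 0) := by
  have : ContinuousOn (fun x : ℝ => (t, x)) (Ici 0) := by fun_prop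
  exact h.ucont.comp this (fun x hx => ⟨ht, hx⟩)

lemma Sol.u_sq_le (h : Sol f u ux μ) {t ξ : ℝ} (ht : 0 ≤ t) (hξ : 0 < ξ) :
    (u t (quantile μ t ξ)) ^ 2 ≤ quantile μ t ξ * ξ := by
  have : IsFiniteMeasure (μ t) := ⟨h.tr.fin t ht⟩
  set q := quantile μ t ξ with hq
  have hq0 : 0 ≤ q := quantile_nonneg' _ _ _
  rcases hq0.eq_or_lt with h0 | h0
  · rw [← h0, h.u_zero ht]; simp
  have hlim : Tendsto (fun x => (u t x) ^ 2) (𝓝[Ico 0 q] q) (𝓝 ((u t q) ^ 2)) :=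
    (((h.u_cont ht) q hq0).mono (fun x hx => hx.1)).pow 2
  have hlim2 : Tendsto (fun x : ℝ => x * ξ) (𝓝[Ico 0 q] q) (𝓝 (q * ξ)) :=
    ((continuous_id.mul continuous_const).tendsto q).mono_left nhdsWithin_le_nhds
  have : (𝓝[Ico 0 q] q).NeBot := by
    rw [← mem_closure_iff_nhdsWithin_neBot, closure_Ico h0.ne]
    exact ⟨hq0, le_rfl⟩
  refine le_of_tendsto_of_tendsto hlim hlim2 ?_
  filter_upwards [self_mem_nhdsWithin] with x hx
  have h1 := h.energy ht le_rfl hx.1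
  rw [h.u_zero ht, sub_zero, sub_zero] at h1
  refine h1.trans (mul_le_mul_of_nonneg_left ?_ hx.1)
  have h2 := h.tr.lt_of_lt_q ht hξ (x := x) hx.2
  rw [measureReal_def]
  apply ENNReal.toReal_le_of_le_ofReal hξ.le
  exact (measure_mono Ioc_subset_Iic_self).trans h2.le

lemma f_growth (hf : ContDiff ℝ 2 f) {L : NNReal} (hL : LipschitzWith L (deriv (deriv f))) :
    ∃ C : ℝ, 0 ≤ C ∧ ∀ w, |deriv f w| ≤ C * (1 + w ^ 2) := by
  set A := |deriv (deriv f) 0| with hA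
  refine ⟨|deriv f 0| + A + L, by positivity, fun w => ?_⟩
  have hd : Differentiable ℝ (deriv f) := by
    have : ContDiff ℝ 1 (deriv f) := by
      have h2 : ContDiff ℝ (1 + 1) f := by simpa [one_add_one_eq_two] using hf
      exact (contDiff_succ_iff_deriv.1 h2).2.2
    exact this.differentiable (by norm_num)
  have hb : ∀ x ∈ uIcc 0 w, ‖deriv (deriv f) x‖ ≤ A + L * |w| := by
    intro x hx
    have h1 := hL.dist_le_mul x 0
    rw [Real.dist_eq, Real.dist_eq, sub_zero] at h1
    have h2 : |x| ≤ |w| := by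
      have := abs_sub_left_of_mem_uIcc hx
      simpa using this
    have h3 : |deriv (deriv f) x| ≤ |deriv (deriv f) x - deriv (deriv f) 0| + A := by
      have := abs_add_le (deriv (deriv f) x - deriv (deriv f) 0) (deriv (deriv f) 0)
      simpa using this
    have h4 : (L:ℝ) * |x| ≤ L * |w| := mul_le_mul_of_nonneg_left h2 L.2
    rw [Real.norm_eq_abs]; linarith
  have := Convex.norm_image_sub_le_of_norm_hasDerivWithin_le
    (fun x _ => (hd x).hasDerivAt.hasDerivWithinAt) hb (convex_uIcc 0 w)
      left_mem_uIcc right_mem_uIcc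
  rw [Real.norm_eq_abs, Real.norm_eq_abs, sub_zero] at this
  have h5 : |deriv f w| ≤ |deriv f w - deriv f 0| + |deriv f 0| := by
    have := abs_add_le (deriv f w - deriv f 0) (deriv f 0)
    simpa using this
  have hA0 : 0 ≤ A := abs_nonneg _
  have hf0 := abs_nonneg (deriv f 0)
  have hL0 : (0:ℝ) ≤ L := L.2
  have hw : |w| ≤ 1 + w ^ 2 := by nlinarith [sq_abs w, sq_nonneg (|w| - 1)]
  have hww : |w| * |w| = w ^ 2 := by rw [← sq, sq_abs]
  have e1 : (A + L * |w|) * |w| = A * |w| + L * w ^ 2 := by rw [← hww]; ring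
  have e2 : A * |w| ≤ A * (1 + w ^ 2) := mul_le_mul_of_nonneg_left hw hA0
  have e3 : 0 ≤ |deriv f 0| * w ^ 2 := by positivity
  nlinarith

lemma Sol.ex_iff (h : Sol f u ux μ) (hf : ContDiff ℝ 2 f) {L : NNReal}
    (hL : LipschitzWith L (deriv (deriv f))) {t₀ t ξ : ℝ} (ht₀ : 0 ≤ t₀) (ht : 0 ≤ t) (hξ : 0 < ξ)
    (hN : ∃ x, ENNReal.ofReal ξ ≤ μ t₀ (Iic x)) : ∃ x, ENNReal.ofReal ξ ≤ μ t (Iic x) := by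
  obtain ⟨C, hC, hg⟩ := f_growth hf hL
  refine h.tr.global (K := C * (1 + ξ)) hξ (fun s hs _ => ?_) ht₀ hN ht
  have h1 := h.u_sq_le hs hξ
  have h0 := quantile_nonneg' μ s ξ
  refine (hg _).trans ?_
  rw [mul_assoc]
  apply mul_le_mul_of_nonneg_left _ hC
  nlinarith

lemma ex_of_lt (m : Measure ℝ) {c : ENNReal} (hc : c < m univ) : ∃ x, c ≤ m (Iic x) := by
  have := (tendsto_measure_Iic_atTop m).eventually (lt_mem_nhds hc)
  obtain ⟨x, hx⟩ := this.exists
  exact ⟨x, hx.le⟩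

lemma Sol.mass_le (h : Sol f u ux μ) (hf : ContDiff ℝ 2 f) {L : NNReal}
    (hL : LipschitzWith L (deriv (deriv f))) {s t : ℝ} (hs : 0 ≤ s) (ht : 0 ≤ t) :
    μ s univ ≤ μ t univ := by
  by_contra hc
  push Not at hc
  obtain ⟨ξ, h1, h2⟩ := ENNReal.lt_iff_exists_nnreal_btwn.1 hc
  have hξ : 0 < (ξ:ℝ) := by
    have : (0:ENNReal) < ξ := lt_of_le_of_lt (zero_le) h1
    exact_mod_cast this
  rw [← ENNReal.ofReal_coe_nnreal] at h1 h2
  obtain ⟨x, hx⟩ := h.ex_iff hf hL hs ht hξ (ex_of_lt _ h2)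
  exact absurd (hx.trans (measure_mono (subset_univ _))) (not_le.2 h1)

lemma Sol.mass (h : Sol f u ux μ) (hf : ContDiff ℝ 2 f) {L : NNReal}
    (hL : LipschitzWith L (deriv (deriv f))) {t : ℝ} (ht : 0 ≤ t) :
    μ t univ = μ 0 univ :=
  le_antisymm (h.mass_le hf hL ht le_rfl) (h.mass_le hf hL le_rfl ht)

lemma Sol.ex (h : Sol f u ux μ) (hf : ContDiff ℝ 2 f) {L : NNReal}
    (hL : LipschitzWith L (deriv (deriv f))) {t ξ : ℝ} (ht : 0 ≤ t) (hξ : 0 < ξ)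
    (hM : ξ < (μ 0 univ).toReal) : ∃ x, ENNReal.ofReal ξ ≤ μ t (Iic x) := by
  apply ex_of_lt
  rw [h.mass hf hL ht]
  exact (ENNReal.ofReal_lt_iff_lt_toReal hξ.le (h.tr.fin 0 le_rfl).ne).2 hM

end sol

/-- Regularity of functions of time and the energy variable. -/
structure NiceFn (ξ T : ℝ) (G : ℝ → ℝ → ℝ) : Prop where
  meas : ∀ s ∈ Icc 0 T, AEStronglyMeasurable (G s) (volume.restrict (Ioc 0 ξ))
  bdd : ∃ R : ℝ, ∀ s ∈ Icc 0 T, ∀ η ∈ Ioc 0 ξ, |G s η| ≤ R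
  cont : ∀ η ∈ Ioc 0 ξ, ContinuousOn (fun s => G s η) (Icc 0 T)

section nice
variable {ξ T : ℝ} {G H : ℝ → ℝ → ℝ}

lemma NiceFn.comp (h : NiceFn ξ T G) {g : ℝ → ℝ} (hg : Continuous g) :
    NiceFn ξ T (fun s η => g (G s η)) := by
  refine ⟨fun s hs => hg.comp_aestronglyMeasurable (h.meas s hs), ?_,
    fun η hη => hg.comp_continuousOn (h.cont η hη)⟩
  obtain ⟨R, hR⟩ := h.bdd
  obtain ⟨B, hB⟩ := (isCompact_Icc (a := -R) (b := R)).exists_bound_of_continuousOn hg.continuousOn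
  exact ⟨B, fun s hs η hη => hB _ (abs_le.1 (hR s hs η hη))⟩

lemma NiceFn.sub (h : NiceFn ξ T G) (h' : NiceFn ξ T H) :
    NiceFn ξ T (fun s η => G s η - H s η) := by
  refine ⟨fun s hs => (h.meas s hs).sub (h'.meas s hs), ?_,
    fun η hη => (h.cont η hη).sub (h'.cont η hη)⟩
  obtain ⟨R, hR⟩ := h.bdd
  obtain ⟨R', hR'⟩ := h'.bdd
  refine ⟨R + R', fun s hs η hη => ?_⟩
  have := hR s hs η hη
  have := hR' s hs η hη
  have := abs_sub (G s η) (H s η)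
  linarith

lemma NiceFn.mono (h : NiceFn ξ T G) {ξ' : ℝ} (hξ : ξ' ≤ ξ) : NiceFn ξ' T G := by
  have hs' : Ioc 0 ξ' ⊆ Ioc 0 ξ := Ioc_subset_Ioc_right hξ
  obtain ⟨R, hR⟩ := h.bdd
  exact ⟨fun s hs => (h.meas s hs).mono_measure (Measure.restrict_mono hs' le_rfl),
    ⟨R, fun s hs η hη => hR s hs η (hs' hη)⟩, fun η hη => h.cont η (hs' hη)⟩

lemma NiceFn.integrable (h : NiceFn ξ T G) (hξ : 0 ≤ ξ) {s : ℝ} (hs : s ∈ Icc 0 T) :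
    IntervalIntegrable (G s) volume 0 ξ := by
  rw [intervalIntegrable_iff_integrableOn_Ioc_of_le hξ]
  obtain ⟨R, hR⟩ := h.bdd
  refine Integrable.of_bound (h.meas s hs) R ?_
  filter_upwards [ae_restrict_mem measurableSet_Ioc] with η hη
  exact hR s hs η hη

lemma NiceFn.contInt (h : NiceFn ξ T G) (hξ : 0 ≤ ξ) :
    ContinuousOn (fun s => ∫ η in (0:ℝ)..ξ, G s η) (Icc 0 T) := by
  obtain ⟨R, hR⟩ := h.bdd
  simp only [intervalIntegral.integral_of_le hξ]
  refine continuousOn_of_dominated (bound := fun _ => R) h.meas ?_ (integrable_const _) ?_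
  · intro s hs
    filter_upwards [ae_restrict_mem measurableSet_Ioc] with η hη
    exact hR s hs η hη
  · filter_upwards [ae_restrict_mem measurableSet_Ioc] with η hη
    exact h.cont η hη

lemma gronwall_unique {g : ℝ → ℝ} {L : NNReal} (hL : LipschitzWith L g) (hξ : 0 ≤ ξ)
    (hT : 0 ≤ T) (hG : NiceFn ξ T G) (hH : NiceFn ξ T H) (U0 : ℝ → ℝ)
    (eG : ∀ᵐ ζ ∂(volume.restrict (Ioc 0 ξ)), ∀ t ∈ Icc 0 T,
      G t ζ = U0 ζ + ∫ s in (0:ℝ)..t, (1 / 2) * ∫ η in (0:ℝ)..ζ, g (G s η))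
    (eH : ∀ᵐ ζ ∂(volume.restrict (Ioc 0 ξ)), ∀ t ∈ Icc 0 T,
      H t ζ = U0 ζ + ∫ s in (0:ℝ)..t, (1 / 2) * ∫ η in (0:ℝ)..ζ, g (H s η)) :
    ∀ᵐ ζ ∂(volume.restrict (Ioc 0 ξ)), ∀ t ∈ Icc 0 T, G t ζ = H t ζ := by
  have hA : NiceFn ξ T (fun s η => |G s η - H s η|) := (hG.sub hH).comp continuous_abs
  set d : ℝ → ℝ := fun s => ∫ η in (0:ℝ)..ξ, |G s η - H s η| with hd
  have hdc : ContinuousOn d (Icc 0 T) := hA.contInt hξ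
  have hd0 : ∀ s, 0 ≤ d s := fun s =>
    intervalIntegral.integral_nonneg hξ fun _ _ => abs_nonneg _
  set D : ℝ → ℝ := fun s => d (max 0 (min s T)) with hD
  have hmem : ∀ s : ℝ, max 0 (min s T) ∈ Icc 0 T := fun s =>
    ⟨le_max_left _ _, max_le hT (min_le_right _ _)⟩
  have hDc : Continuous D := hdc.comp_continuous (by fun_prop) hmem
  have hDd : ∀ s ∈ Icc 0 T, D s = d s := by
    intro s hs
    simp only [hD]; rw [min_eq_left hs.2, max_eq_right hs.1]
  set E : ℝ → ℝ := fun t => ∫ s in (0:ℝ)..t, D s with hE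
  have hED : ∀ t, HasDerivAt E (D t) t := fun t => (hDc.integral_hasStrictDerivAt 0 t).hasDerivAt
  have hE0 : ∀ t, 0 ≤ t → 0 ≤ E t := fun t ht =>
    intervalIntegral.integral_nonneg ht fun _ _ => hd0 _
  have hgG := hG.comp hL.continuous
  have hgH := hH.comp hL.continuous
  have key : ∀ᵐ ζ ∂(volume.restrict (Ioc 0 ξ)), ∀ t ∈ Icc 0 T,
      |G t ζ - H t ζ| ≤ L / 2 * E t := by
    filter_upwards [eG, eH, ae_restrict_mem measurableSet_Ioc] with ζ h1 h2 hζ t ht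
    have hsub : uIcc 0 t ⊆ Icc 0 T := by
      rw [uIcc_of_le ht.1]; exact Icc_subset_Icc_right ht.2
    have c1 : ContinuousOn (fun s => (1 / 2 : ℝ) * ∫ η in (0:ℝ)..ζ, g (G s η)) (uIcc 0 t) :=
      (continuousOn_const.mul ((hgG.mono hζ.2).contInt hζ.1.le)).mono hsub
    have c2 : ContinuousOn (fun s => (1 / 2 : ℝ) * ∫ η in (0:ℝ)..ζ, g (H s η)) (uIcc 0 t) :=
      (continuousOn_const.mul ((hgH.mono hζ.2).contInt hζ.1.le)).mono hsub
    rw [h1 t ht, h2 t ht, add_sub_add_left_eq_sub,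
      ← intervalIntegral.integral_sub c1.intervalIntegrable c2.intervalIntegrable]
    rw [← Real.norm_eq_abs, hE, ← intervalIntegral.integral_const_mul]
    apply intervalIntegral.norm_integral_le_of_norm_le ht.1 _
      ((show Continuous (fun s => (L:ℝ) / 2 * D s) from
        continuous_const.mul hDc).intervalIntegrable _ _)
    refine Eventually.of_forall fun s hs => ?_
    have hsT : s ∈ Icc 0 T := ⟨hs.1.le, hs.2.trans ht.2⟩
    have i1 := (hgG.mono hζ.2).integrable hζ.1.le hsT
    have i2 := (hgH.mono hζ.2).integrable hζ.1.le hsT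
    have i3 := (hA.mono hζ.2).integrable hζ.1.le hsT
    have i4 := hA.integrable hξ hsT
    rw [← mul_sub, ← intervalIntegral.integral_sub i1 i2, norm_mul, hDd s hsT]
    have h3 : ‖∫ η in (0:ℝ)..ζ, (g (G s η) - g (H s η))‖ ≤
        ∫ η in (0:ℝ)..ζ, (L:ℝ) * |G s η - H s η| := by
      apply intervalIntegral.norm_integral_le_of_norm_le hζ.1.le _ (i3.const_mul _)
      refine Eventually.of_forall fun η _ => ?_
      have := hL.dist_le_mul (G s η) (H s η)
      rwa [Real.dist_eq, Real.dist_eq] at this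
    rw [intervalIntegral.integral_const_mul] at h3
    have h4 : ∫ η in (0:ℝ)..ζ, |G s η - H s η| ≤ d s := by
      apply intervalIntegral.integral_mono_interval le_rfl hζ.1.le hζ.2 _ i4
      exact Eventually.of_forall fun _ => abs_nonneg _
    have h5 := mul_le_mul_of_nonneg_left h4 L.2
    have h6 : ‖(1 / 2 : ℝ)‖ = 1 / 2 := by norm_num
    rw [h6]
    have h7 := h3.trans h5
    calc (1 / 2 : ℝ) * _ ≤ 1 / 2 * ((L:ℝ) * d s) := mul_le_mul_of_nonneg_left h7 (by norm_num)
      _ = L / 2 * d s := by ring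
  have hdE : ∀ t ∈ Icc 0 T, d t ≤ ξ * (L / 2) * E t := by
    intro t ht
    have h1 : d t ≤ ∫ η in (0:ℝ)..ξ, L / 2 * E t := by
      simp only [hd]
      rw [intervalIntegral.integral_of_le hξ, intervalIntegral.integral_of_le hξ]
      apply integral_mono_ae ((hA.integrable hξ ht).1) (integrable_const _)
      filter_upwards [key] with ζ hζ
      exact hζ t ht
    rw [intervalIntegral.integral_const, smul_eq_mul, sub_zero] at h1
    linarith
  have hEz : ∀ t ∈ Icc 0 T, E t = 0 := by
    refine eq_zero_of_abs_deriv_le_mul_abs_self_of_eq_zero_right (f' := D) (K := ξ * (L / 2))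
      (fun t _ => (hED t).continuousAt.continuousWithinAt)
      (fun t _ => (hED t).hasDerivWithinAt) (by simp [hE]) ?_
    intro t ht
    have htT : t ∈ Icc 0 T := ⟨ht.1, ht.2.le⟩
    rw [hDd t htT, Real.norm_eq_abs, Real.norm_eq_abs, abs_of_nonneg (hd0 t),
      abs_of_nonneg (hE0 t ht.1)]
    exact hdE t htT
  filter_upwards [key] with ζ hζ t ht
  have := hζ t ht
  rw [hEz t ht, mul_zero] at this
  have := abs_eq_zero.1 (le_antisymm this (abs_nonneg _))
  linarith

end nice

section fin
variable {f : ℝ → ℝ} {u ux : ℝ → ℝ → ℝ} {μ : ℝ → Measure ℝ}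

lemma Sol.nice (h : Sol f u ux μ) (hf : ContDiff ℝ 2 f) {L : NNReal}
    (hL : LipschitzWith L (deriv (deriv f))) {ξ T : ℝ} (hξ : 0 < ξ)
    (hM : ξ < (μ 0 univ).toReal) : NiceFn ξ T (fun s η => u s (quantile μ s η)) := by
  have hqc : ∀ η ∈ Ioc 0 ξ, ContinuousOn (fun s => quantile μ s η) (Icc 0 T) := by
    intro η hη s hs
    exact ((h.tr.hasDeriv hs.1 hη.1
      (h.ex hf hL hs.1 hη.1 (hη.2.trans_lt hM))).continuousWithinAt).mono Icc_subset_Ici_self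
  have hmono : ∀ s ∈ Icc 0 T, MonotoneOn (quantile μ s) (Ioc 0 ξ) := by
    intro s hs a ha b hb hab
    apply h.tr.q_le hs.1 ha.1
    exact (ENNReal.ofReal_le_ofReal hab).trans
      (h.tr.q_mem hs.1 hb.1 (h.ex hf hL hs.1 hb.1 (hb.2.trans_lt hM)))
  refine ⟨fun s hs => ?_, ?_, fun η hη => ?_⟩
  · have h1 : AEMeasurable (quantile μ s) (volume.restrict (Ioc 0 ξ)) :=
      aemeasurable_restrict_of_monotoneOn measurableSet_Ioc (hmono s hs)
    have hc : Continuous (fun x => u s (max 0 x)) :=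
      (h.u_cont hs.1).comp_continuous (by fun_prop) (fun x => mem_Ici.2 (le_max_left _ _))
    have h2 : AEStronglyMeasurable (fun η => u s (max 0 (quantile μ s η)))
        (volume.restrict (Ioc 0 ξ)) := hc.comp_aestronglyMeasurable h1.aestronglyMeasurable
    refine h2.congr (Eventually.of_forall fun η => ?_)
    simp only [max_eq_right (quantile_nonneg' μ s η)]
  · obtain ⟨R, hR⟩ := isCompact_Icc.exists_bound_of_continuousOn (hqc ξ ⟨hξ, le_rfl⟩)
    obtain ⟨B, hB⟩ := ((isCompact_Icc (a := (0:ℝ)) (b := T)).prod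
      (isCompact_Icc (a := (0:ℝ)) (b := R))).exists_bound_of_continuousOn (h.ucont.mono (by
        rintro ⟨a, b⟩ ⟨h1, h2⟩; exact ⟨h1.1, h2.1⟩))
    refine ⟨B, fun s hs η hη => hB (s, quantile μ s η) ⟨hs, quantile_nonneg' _ _ _, ?_⟩⟩
    exact (hmono s hs hη ⟨hξ, le_rfl⟩ hη.2).trans ((le_abs_self _).trans (hR s hs))
  · have : ContinuousOn (fun s => (s, quantile μ s η)) (Icc 0 T) :=
      continuousOn_id.prodMk (hqc η hη)
    exact h.ucont.comp this (fun s hs => ⟨hs.1, quantile_nonneg' _ _ _⟩)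

lemma quantile_congr {μ₁ μ₂ : ℝ → Measure ℝ} {t : ℝ} (h : μ₁ t = μ₂ t) (ξ : ℝ) :
    quantile μ₁ t ξ = quantile μ₂ t ξ := by
  unfold quantile; rw [h]

variable {u₁ ux₁ u₂ ux₂ : ℝ → ℝ → ℝ} {μ₁ μ₂ : ℝ → Measure ℝ} {ubar : ℝ → ℝ} {μbar : Measure ℝ}

lemma good_ae (hf : ContDiff ℝ 2 f) {L : NNReal} (hL : LipschitzWith L (deriv (deriv f)))
    (h₁ : ConsSol f ubar μbar u₁ ux₁ μ₁) (h₂ : ConsSol f ubar μbar u₂ ux₂ μ₂)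
    {T ξ : ℝ} (hT : 0 ≤ T) (hξ : 0 < ξ) (hM : ξ < (μbar univ).toReal) :
    ∀ᵐ ζ ∂(volume.restrict (Ioc 0 ξ)), quantile μ₁ T ζ = quantile μ₂ T ζ ∧
      u₁ T (quantile μ₁ T ζ) = u₂ T (quantile μ₂ T ζ) := by
  have s₁ := consSol_sol hf h₁
  have s₂ := consSol_sol hf h₂
  obtain ⟨-, hi₁, -, -, -, hm₁, -, -, hc₁⟩ := h₁
  obtain ⟨-, hi₂, -, -, -, hm₂, -, -, hc₂⟩ := h₂
  have hM₁ : ξ < (μ₁ 0 univ).toReal := by rw [hm₁]; exact hM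
  have hM₂ : ξ < (μ₂ 0 univ).toReal := by rw [hm₂]; exact hM
  have hq0 : ∀ ζ, quantile μ₁ 0 ζ = quantile μ₂ 0 ζ := quantile_congr (hm₁.trans hm₂.symm)
  have hU0 : ∀ ζ, u₂ 0 (quantile μ₂ 0 ζ) = u₁ 0 (quantile μ₁ 0 ζ) := by
    intro ζ
    rw [hi₁ _ (quantile_nonneg' _ _ _), hi₂ _ (quantile_nonneg' _ _ _), hq0]
  have hsub : Ioc 0 ξ ⊆ Icc 0 (μbar univ).toReal := fun x hx => ⟨hx.1.le, hx.2.trans hM.le⟩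
  have key := gronwall_unique hL hξ.le hT (s₁.nice hf hL (T := T) hξ hM₁)
    (s₂.nice hf hL (T := T) hξ hM₂) (fun ζ => u₁ 0 (quantile μ₁ 0 ζ))
    (by
      filter_upwards [ae_restrict_of_ae_restrict_of_subset hsub hc₁] with ζ hζ t ht
      exact hζ t ht.1)
    (by
      filter_upwards [ae_restrict_of_ae_restrict_of_subset hsub hc₂] with ζ hζ t ht
      rw [hζ t ht.1, hU0])
  filter_upwards [key, ae_restrict_mem measurableSet_Ioc] with ζ hζ hζm
  refine ⟨?_, hζ T ⟨hT, le_rfl⟩⟩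
  have hd : ∀ t, 0 ≤ t → t ≤ T →
      HasDerivWithinAt (fun t => quantile μ₁ t ζ - quantile μ₂ t ζ) 0 (Ici 0) t := by
    intro t ht htT
    have d1 := s₁.tr.hasDeriv ht hζm.1 (s₁.ex hf hL ht hζm.1 (hζm.2.trans_lt hM₁))
    have d2 := s₂.tr.hasDeriv ht hζm.1 (s₂.ex hf hL ht hζm.1 (hζm.2.trans_lt hM₂))
    have := d1.sub d2
    have e : deriv f (u₁ t (quantile μ₁ t ζ)) - deriv f (u₂ t (quantile μ₂ t ζ)) = 0 := by
      rw [hζ t ⟨ht, htT⟩, sub_self]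
    rw [e] at this
    exact this
  have := constant_of_has_deriv_right_zero
    (f := fun t => quantile μ₁ t ζ - quantile μ₂ t ζ) (a := 0) (b := T)
    (fun t ht => (hd t ht.1 ht.2).continuousWithinAt.mono Icc_subset_Ici_self)
    (fun t ht => (hd t ht.1 ht.2.le).mono (Ici_subset_Ici.2 ht.1)) T ⟨hT, le_rfl⟩
  simp only [hq0, sub_self] at this
  linarith

lemma good_ex (hf : ContDiff ℝ 2 f) {L : NNReal} (hL : LipschitzWith L (deriv (deriv f)))
    (h₁ : ConsSol f ubar μbar u₁ ux₁ μ₁) (h₂ : ConsSol f ubar μbar u₂ ux₂ μ₂)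
    {T a b : ℝ} (hT : 0 ≤ T) (ha : 0 ≤ a) (hab : a < b) (hM : b ≤ (μbar univ).toReal) :
    ∃ ζ, a < ζ ∧ ζ < b ∧ quantile μ₁ T ζ = quantile μ₂ T ζ ∧
      u₁ T (quantile μ₁ T ζ) = u₂ T (quantile μ₂ T ζ) := by
  obtain ⟨ξ, h1, h2⟩ := exists_between hab
  have key := good_ae hf hL h₁ h₂ hT (ha.trans_lt h1) (h2.trans_le hM)
  have key2 := ae_restrict_of_ae_restrict_of_subset
    (show Ioo a ξ ⊆ Ioc 0 ξ from fun x hx => ⟨ha.trans_lt hx.1, hx.2.le⟩) key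
  have hne : (ae (volume.restrict (Ioo a ξ))).NeBot := by
    rw [ae_neBot, Ne, Measure.restrict_eq_zero, Real.volume_Ioo]
    simp [h1]
  obtain ⟨ζ, hζ, hm⟩ := (key2.and (ae_restrict_mem measurableSet_Ioo)).exists
  exact ⟨ζ, hm.1, hm.2.trans h2, hζ⟩

lemma meas_le (hf : ContDiff ℝ 2 f) {L : NNReal} (hL : LipschitzWith L (deriv (deriv f)))
    (h₁ : ConsSol f ubar μbar u₁ ux₁ μ₁) (h₂ : ConsSol f ubar μbar u₂ ux₂ μ₂)
    {t : ℝ} (ht : 0 ≤ t) (x : ℝ) : μ₂ t (Iic x) ≤ μ₁ t (Iic x) := by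
  have s₁ := consSol_sol hf h₁
  have s₂ := consSol_sol hf h₂
  have i₁ : IsFiniteMeasure (μ₁ t) := ⟨s₁.tr.fin t ht⟩
  have i₂ : IsFiniteMeasure (μ₂ t) := ⟨s₂.tr.fin t ht⟩
  have hm₁ : μ₁ 0 = μbar := h₁.2.2.2.2.2.1
  have hm₂ : μ₂ 0 = μbar := h₂.2.2.2.2.2.1
  have hfin : μbar univ ≠ ⊤ := by rw [← hm₁]; exact (s₁.tr.fin 0 le_rfl).ne
  by_contra hc
  push Not at hc
  have hab := (ENNReal.toReal_lt_toReal (measure_ne_top _ _) (measure_ne_top _ _)).2 hc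
  have hbM : (μ₂ t (Iic x)).toReal ≤ (μbar univ).toReal := by
    apply ENNReal.toReal_mono hfin
    rw [← hm₂, ← s₂.mass hf hL ht]
    exact measure_mono (subset_univ _)
  obtain ⟨ζ, h1, h2, h3, -⟩ := good_ex hf hL h₁ h₂ ht ENNReal.toReal_nonneg hab hbM
  have hζ : 0 < ζ := ENNReal.toReal_nonneg.trans_lt h1
  have e1 : ENNReal.ofReal ζ ≤ μ₂ t (Iic x) :=
    ((ENNReal.ofReal_lt_iff_lt_toReal hζ.le (measure_ne_top _ _)).2 h2).le
  have e2 := s₂.tr.q_le ht hζ e1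
  rw [← h3] at e2
  have e3 := s₁.tr.q_mem ht hζ (s₁.ex hf hL ht hζ (by rw [hm₁]; exact h2.trans_le hbM))
  have e4 := e3.trans (measure_mono (Iic_subset_Iic.2 e2))
  have e5 := (ENNReal.ofReal_le_iff_le_toReal (measure_ne_top _ _)).1 e4
  linarith

lemma meas_eq (hf : ContDiff ℝ 2 f) {L : NNReal} (hL : LipschitzWith L (deriv (deriv f)))
    (h₁ : ConsSol f ubar μbar u₁ ux₁ μ₁) (h₂ : ConsSol f ubar μbar u₂ ux₂ μ₂)
    {t : ℝ} (ht : 0 ≤ t) : μ₁ t = μ₂ t := by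
  have i₁ : IsFiniteMeasure (μ₁ t) := ⟨(consSol_sol hf h₁).tr.fin t ht⟩
  exact Measure.ext_of_Iic _ _ fun x =>
    le_antisymm (meas_le hf hL h₂ h₁ ht x) (meas_le hf hL h₁ h₂ ht x)

lemma u_eq (hf : ContDiff ℝ 2 f) {L : NNReal} (hL : LipschitzWith L (deriv (deriv f)))
    (h₁ : ConsSol f ubar μbar u₁ ux₁ μ₁) (h₂ : ConsSol f ubar μbar u₂ ux₂ μ₂)
    {t x : ℝ} (ht : 0 ≤ t) (hx : 0 ≤ x) : u₁ t x = u₂ t x := by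
  have s₁ := consSol_sol hf h₁
  have s₂ := consSol_sol hf h₂
  have i₁ : IsFiniteMeasure (μ₁ t) := ⟨s₁.tr.fin t ht⟩
  have hm₁ : μ₁ 0 = μbar := h₁.2.2.2.2.2.1
  have hfin : μbar univ ≠ ⊤ := by rw [← hm₁]; exact (s₁.tr.fin 0 le_rfl).ne
  have hμ := meas_eq hf hL h₁ h₂ ht
  set m := (μ₁ t).real (Iic x) with hm
  have hm0 : 0 ≤ m := measureReal_nonneg
  have hmM : m ≤ (μbar univ).toReal := by
    apply ENNReal.toReal_mono hfin
    rw [← hm₁, ← s₁.mass hf hL ht]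
    exact measure_mono (subset_univ _)
  suffices hz : (u₁ t x - u₂ t x) ^ 2 ≤ 0 by
    have := pow_eq_zero_iff (two_ne_zero) |>.1 (le_antisymm hz (sq_nonneg _))
    linarith
  rcases hm0.eq_or_lt with h0 | h0
  · have e1 := s₁.energy ht le_rfl hx
    have e2 := s₂.energy ht le_rfl hx
    have hle : (μ₁ t).real (Ioc 0 x) ≤ 0 := by
      rw [h0]; exact measureReal_mono Ioc_subset_Iic_self
    have hz : (μ₁ t).real (Ioc 0 x) = 0 := le_antisymm hle measureReal_nonneg
    rw [← hμ, hz, mul_zero, s₂.u_zero ht] at e2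
    rw [hz, mul_zero, s₁.u_zero ht] at e1
    nlinarith [sq_nonneg (u₁ t x + u₂ t x)]
  have hall : ∀ ε, 0 < ε → (u₁ t x - u₂ t x) ^ 2 ≤ 4 * x * ε := by
    intro ε hε
    obtain ⟨ζ, h1, h2, h3, h4⟩ := good_ex hf hL h₁ h₂ ht (a := max 0 (m - ε)) (le_max_left _ _)
      (max_lt h0 (by linarith)) hmM
    have hζ : 0 < ζ := (le_max_left _ _).trans_lt h1
    have hζε : m - ε < ζ := (le_max_right _ _).trans_lt h1
    set y := quantile μ₁ t ζ with hy
    have hy0 : 0 ≤ y := quantile_nonneg' _ _ _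
    have hyx : y ≤ x := s₁.tr.q_le ht hζ
      ((ENNReal.ofReal_lt_iff_lt_toReal hζ.le (measure_ne_top _ _)).2 h2).le
    have hmem := s₁.tr.q_mem ht hζ (s₁.ex hf hL ht hζ (by rw [hm₁]; exact h2.trans_le hmM))
    have hζy : ζ ≤ (μ₁ t).real (Iic y) :=
      (ENNReal.ofReal_le_iff_le_toReal (measure_ne_top _ _)).1 hmem
    have hIoc : (μ₁ t).real (Ioc y x) ≤ ε := by
      have hun : (μ₁ t).real (Iic x) = (μ₁ t).real (Iic y) + (μ₁ t).real (Ioc y x) := by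
        have hdj : Disjoint (Iic y) (Ioc y x) :=
          Set.disjoint_left.2 fun z hz hw => absurd (mem_Iic.1 hz) (not_le.2 hw.1)
        rw [← measureReal_union hdj measurableSet_Ioc, Iic_union_Ioc_eq_Iic hyx]
      linarith
    have e1 := s₁.energy ht hy0 hyx
    have e2 := s₂.energy ht hy0 hyx
    rw [← hμ] at e2
    rw [← h3] at h4
    rw [← h4] at e2
    have hb : (x - y) * (μ₁ t).real (Ioc y x) ≤ x * ε :=
      mul_le_mul (by linarith) hIoc measureReal_nonneg hx
    nlinarith [sq_nonneg ((u₁ t x - u₁ t y) + (u₂ t x - u₁ t y))]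
  refine le_of_forall_pos_le_add fun δ hδ => ?_
  have := hall (δ / (4 * x + 1)) (by positivity)
  refine this.trans ?_
  rw [zero_add, mul_div_assoc', div_le_iff₀ (by positivity)]
  nlinarith

end fin

/-- Uniqueness of conservative solutions (Theorem 4.1 of the paper): two
conservative solutions with the same data `(ū, μ̄)`, both satisfying conditions
(a), (b), (c), coincide: `u¹ = u²` on the quarter plane and `μ¹_{(t)} = μ²_{(t)}`
for all `t ≥ 0`. -/
theorem stmt19 (f : ℝ → ℝ) (hf : ContDiff ℝ 2 f) (hf0 : 0 ≤ deriv f 0)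
    (L : NNReal) (hfLip : LipschitzWith L (deriv (deriv f)))
    (ubar ubar' : ℝ → ℝ)
    (hubar0 : ubar 0 = 0)
    (hubar'loc : ∀ x : ℝ, 0 ≤ x → IntervalIntegrable ubar' volume 0 x)
    (hubar : ∀ x : ℝ, 0 ≤ x → ubar x = ∫ y in (0:ℝ)..x, ubar' y)
    (hubar'L2 : IntegrableOn (fun x => (ubar' x) ^ 2) (Set.Ici 0))
    (μbar : Measure ℝ) [IsFiniteMeasure μbar]
    (hμbarsupp : μbar (Set.Iio 0) = 0)
    (hμbarac : ∀ᵐ x ∂(volume.restrict (Set.Ici 0)),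
      μbar.rnDeriv volume x = ENNReal.ofReal ((ubar' x) ^ 2))
    (u₁ ux₁ u₂ ux₂ : ℝ → ℝ → ℝ) (μ₁ μ₂ : ℝ → Measure ℝ)
    (h₁ : ConsSol f ubar μbar u₁ ux₁ μ₁)
    (h₂ : ConsSol f ubar μbar u₂ ux₂ μ₂) :
    (∀ t x : ℝ, 0 ≤ t → 0 ≤ x → u₁ t x = u₂ t x) ∧
    (∀ t : ℝ, 0 ≤ t → μ₁ t = μ₂ t) := by
  exact ⟨fun t x ht hx => u_eq hf hfLip h₁ h₂ ht hx, fun t ht => meas_eq hf hfLip h₁ h₂ ht⟩
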